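/- arXiv:1407.3041 — 2 statements merged into one kernel-verified Lean document; each statement's English description precedes it below -/
import Mathlib

section
/- Let G = (V, E) be a strongly connected digraph with start vertex s, and let v, w ∈ V be distinct. Then v and w are 2-edge-connected in G if and only if there is a root r (r = s or r marked) such that v and w are both ordinary vertices of the auxiliary graph G_r (i.e., v, w ∈ T(r)) and v and w are 2-edge-connected in G_r. -/
variable {V : Type*}

/-- `p` is a path from `u` to `w` in the digraph with edge set `E`:
a nonempty list of vertices starting at `u`, ending at `w`, with consecutive edges in `E`. -/
def IsPathFrom (E : Set (V × V)) (u w : V) (p : List V) : Prop :=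
  p.head? = some u ∧ p.getLast? = some w ∧ p.Chain' (fun a b => (a, b) ∈ E)

/-- There is a path from `u` to `w` in the digraph with edge set `E`. -/
def Reaches (E : Set (V × V)) (u w : V) : Prop :=
  ∃ p, IsPathFrom E u w p

/-- Every vertex has a path to every other vertex. -/
def StronglyConnected (E : Set (V × V)) : Prop :=
  ∀ u w : V, Reaches E u w

/-- `v` and `w` are 2-edge-connected: `v = w` or, for every edge `e`,
there are paths from `v` to `w` and from `w` to `v` avoiding `e`. -/
def TwoEdgeConn (E : Set (V × V)) (v w : V) : Prop :=
  v = w ∨ ∀ e ∈ E, Reaches (E \ {e}) v w ∧ Reaches (E \ {e}) w v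

/-- `w` is 2-edge-connected from `v`: for every edge `e` there is a path
from `v` to `w` avoiding `e`. -/
def TwoEdgeConnFrom (E : Set (V × V)) (v w : V) : Prop :=
  ∀ e ∈ E, Reaches (E \ {e}) v w

/-- `u` dominates `w` in the flow graph with start vertex `s`:
every path from `s` to `w` contains `u`. -/
def Dominates (E : Set (V × V)) (s u w : V) : Prop :=
  ∀ p, IsPathFrom E s w p → u ∈ p

/-- `(u, w)` is a bridge of the flow graph with start vertex `s`:
every path from `s` to `w` contains the edge `(u, w)`. -/
def IsBridge (E : Set (V × V)) (s u w : V) : Prop :=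
  (u, w) ∈ E ∧ ∀ p, IsPathFrom E s w p → (u, w) ∈ p.zip p.tail

/-- `w` is marked in the flow graph with start vertex `s`: some bridge ends at `w`. -/
def Marked (E : Set (V × V)) (s w : V) : Prop :=
  ∃ u, IsBridge E s u w

/-- The reverse digraph: every edge direction is reversed. -/
def reverseE (E : Set (V × V)) : Set (V × V) :=
  {e | (e.2, e.1) ∈ E}

/-- `u` and `w` are mutually reachable. -/
def MutualReach (E : Set (V × V)) (u w : V) : Prop :=
  Reaches E u w ∧ Reaches E w u

/-- The number of strongly connected components: the number of equivalence
classes of the mutual-reachability relation. -/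
noncomputable def numSCC (E : Set (V × V)) : ℕ :=
  Nat.card (Quot (MutualReach E))

/-- `e` is a strong bridge: removing it increases the number of strongly
connected components. -/
def IsStrongBridge (E : Set (V × V)) (e : V × V) : Prop :=
  e ∈ E ∧ numSCC E < numSCC (E \ {e})

/-- `d` is the immediate dominator of `w` in the flow graph with start vertex `s`:
`d` is a proper dominator of `w` dominated by every proper dominator of `w`. -/
def ImmDomIs (E : Set (V × V)) (s w d : V) : Prop :=
  Dominates E s d w ∧ d ≠ w ∧ ∀ x, Dominates E s x w → x ≠ w → Dominates E s x d

/-- `r` is the deepest marked dominator `r_v` of `v`: either `r` is a marked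
dominator of `v` dominated by every marked dominator of `v`, or no marked vertex
dominates `v` and `r = s`. -/
def DeepestMarkedDomIs (E : Set (V × V)) (s v r : V) : Prop :=
  (Marked E s r ∧ Dominates E s r v ∧
    ∀ x, Marked E s x → Dominates E s x v → Dominates E s x r)
  ∨ (r = s ∧ ∀ x, Marked E s x → ¬ Dominates E s x v)

/-- `T(r)`: the vertices whose deepest marked dominator is `r`. -/
def Tset (E : Set (V × V)) (s r : V) : Set V :=
  {v | DeepestMarkedDomIs E s v r}

/-- The roots of the decomposition of the dominator tree: `s` and the marked vertices. -/
def IsRoot (E : Set (V × V)) (s r : V) : Prop :=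
  r = s ∨ Marked E s r

/-- `z` is a marked child (in the dominator tree) of a boundary vertex of `T(r)`. -/
def MarkedChildOfBoundary (E : Set (V × V)) (s r z : V) : Prop :=
  Marked E s z ∧ ∃ x ∈ Tset E s r, ImmDomIs E s z x

/-- The vertex set `V_r` of the auxiliary graph `G_r` (with `dr` playing the role
of `d(r)` when `r ≠ s`): the ordinary vertices `T(r)`, the marked children of
boundary vertices of `T(r)`, and (if `r ≠ s`) the vertex `d(r)`. -/
def auxVerts (E : Set (V × V)) (s r dr : V) : Set V :=
  Tset E s r ∪ {z | MarkedChildOfBoundary E s r z} ∪ {x | r ≠ s ∧ x = dr}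

/-- The edge set `E_r` of the auxiliary graph `G_r` (with `dr` playing the role of
`d(r)` when `r ≠ s`): edges of `G` between ordinary vertices; the edge `(v, w)` for
each boundary vertex `v ∈ T(r)` and marked child `w` of `v`; the edge `(d(r), r)` if
`r ≠ s`; and the shortcut edges of types (a), (b), (c). -/
def auxEdges (E : Set (V × V)) (s r dr : V) : Set (V × V) :=
  {e | e ∈ E ∧ e.1 ∈ Tset E s r ∧ e.2 ∈ Tset E s r} ∪
  {e | e.1 ∈ Tset E s r ∧ Marked E s e.2 ∧ ImmDomIs E s e.2 e.1} ∪
  {e | r ≠ s ∧ e = (dr, r)} ∪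
  {e | ∃ u v, (u, v) ∈ E ∧ u ∈ Tset E s r ∧ ¬ Dominates E s r v ∧ e = (u, dr)} ∪
  {e | ∃ u v z, (u, v) ∈ E ∧ v ∈ Tset E s r ∧ Dominates E s r u ∧ u ∉ Tset E s r ∧
      MarkedChildOfBoundary E s r z ∧ Dominates E s z u ∧ e = (z, v)} ∪
  {e | ∃ u v z, (u, v) ∈ E ∧ Dominates E s r u ∧ u ∉ Tset E s r ∧ ¬ Dominates E s r v ∧
      MarkedChildOfBoundary E s r z ∧ Dominates E s z u ∧ e = (z, dr)}

/-!
Contract the part of `G` that is not dominated by `r` to `d(r)`, and for each marked child `z` of a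
boundary vertex of `T(r)` contract the part dominated by `z` to `z`. The auxiliary graph `G_r` is
exactly the image of `G` under this contraction, without the loops at contracted vertices.

Each contracted region is *gated*: a bridge of `G(s)` is either the only edge entering it or the
only edge leaving it. Hence a walk between ordinary vertices that omits the gate never visits the
region, both in `G` and, with the region shrunk to a point, in `G_r`. So in either graph
2-edge-connectivity from `v` to `w` provides, for each contracted region, a walk missing that region
altogether. This avoids an edge touching a contracted region; an edge between ordinary vertices
belongs to both graphs and is avoided directly. Walks project to `G_r`, and they lift back because,
by strong connectivity, the vertex representing a gated region is joined inside it to every edge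
leaving it and from every edge entering it.
-/

section Walks

variable {E F : Set (V × V)} {u x y w : V} {p : List V}

theorem isPathFrom_singleton (E : Set (V × V)) (u : V) : IsPathFrom E u u [u] :=
  ⟨rfl, rfl, .singleton u⟩

theorem IsPathFrom.concat (hp : IsPathFrom E u x p) (hxy : (x, y) ∈ E) :
    IsPathFrom E u y (p ++ [y]) := by
  obtain ⟨hhead, hlast, hchain⟩ := hp
  refine ⟨by simp [hhead], by simp, ?_⟩
  refine List.isChain_append.2 ⟨hchain, .singleton y, ?_⟩
  simp [hlast, hxy]

theorem IsPathFrom.concat_induction {motive : V → List V → Prop} (hp : IsPathFrom E u w p)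
    (singleton : motive u [u])
    (concat : ∀ x y p, IsPathFrom E u x p → (x, y) ∈ E → motive x p → motive y (p ++ [y])) :
    motive w p := by
  induction p using List.reverseRecOn generalizing w with
  | nil => simp [IsPathFrom] at hp
  | append_singleton p y ih =>
    obtain ⟨hhead, hlast, hchain⟩ := hp
    obtain rfl : y = w := by simpa using hlast
    obtain ⟨hp, -, hstep⟩ := List.isChain_append.1 hchain
    rcases List.eq_nil_or_concat' p with rfl | ⟨p, x, rfl⟩
    · obtain rfl : y = u := by simpa using hhead
      exact singleton
    · have hx : IsPathFrom E u x (p ++ [x]) := ⟨by simpa using hhead, by simp, hp⟩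
      exact concat x y _ hx (hstep x (by simp) y (by simp)) (ih hx)

theorem IsPathFrom.mono (hp : IsPathFrom E u w p) (hEF : E ⊆ F) : IsPathFrom F u w p :=
  ⟨hp.1, hp.2.1, hp.2.2.imp fun _ _ h ↦ hEF h⟩

theorem IsPathFrom.mem_of_mem_zip_tail (hp : IsPathFrom E u w p)
    (hxy : (x, y) ∈ p.zip p.tail) : (x, y) ∈ E := by
  obtain ⟨i, hi, hget⟩ := List.mem_iff_getElem.1 hxy
  simp only [List.getElem_zip, List.getElem_tail, Prod.mk.injEq] at hget
  obtain ⟨rfl, rfl⟩ := hget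
  exact List.isChain_iff_getElem.1 hp.2.2 i _

theorem IsPathFrom.exists_subset_of_mem (hp : IsPathFrom E u w p) :
    ∀ x ∈ p, ∃ q ⊆ p, IsPathFrom E u x q := by
  refine hp.concat_induction (motive := fun _ p ↦ ∀ x ∈ p, ∃ q ⊆ p, IsPathFrom E u x q) ?_ ?_
  · intro x hx
    obtain rfl : x = u := by simpa using hx
    exact ⟨[x], List.Subset.refl _, isPathFrom_singleton E x⟩
  · intro a b p hpa hab ih x hx
    rcases List.mem_append.1 hx with hxp | hxb
    · obtain ⟨q, hqp, hq⟩ := ih x hxp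
      exact ⟨q, List.subset_append_of_subset_left _ hqp, hq⟩
    · obtain rfl : x = b := by simpa using hxb
      exact ⟨_, List.Subset.refl _, hpa.concat hab⟩

theorem Reaches.refl (E : Set (V × V)) (u : V) : Reaches E u u :=
  ⟨[u], isPathFrom_singleton E u⟩

theorem Reaches.tail (hux : Reaches E u x) (hxy : (x, y) ∈ E) : Reaches E u y :=
  let ⟨p, hp⟩ := hux
  ⟨p ++ [y], hp.concat hxy⟩

theorem Reaches.mono (h : Reaches E u w) (hEF : E ⊆ F) : Reaches F u w :=
  let ⟨p, hp⟩ := h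
  ⟨p, hp.mono hEF⟩

@[elab_as_elim]
theorem Reaches.tail_induction {motive : ∀ w, Reaches E u w → Prop} (h : Reaches E u w)
    (refl : motive u (.refl E u))
    (tail : ∀ x y (hux : Reaches E u x) (hxy : (x, y) ∈ E),
      motive x hux → motive y (hux.tail hxy)) :
    motive w h := by
  obtain ⟨p, hp⟩ := h
  have hmotive : ∃ h, motive w h :=
    hp.concat_induction (motive := fun w _ ↦ ∃ h, motive w h) ⟨_, refl⟩
      fun x y _ _ hxy ⟨hux, hx⟩ ↦ ⟨_, tail x y hux hxy hx⟩
  exact hmotive.2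

theorem Reaches.single (hxy : (x, y) ∈ E) : Reaches E x y :=
  (Reaches.refl E x).tail hxy

theorem Reaches.trans (hux : Reaches E u x) (hxw : Reaches E x w) : Reaches E u w := by
  induction hxw using Reaches.tail_induction with
  | refl => exact hux
  | tail a b _ hab ih => exact ih.tail hab

theorem Reaches.head (hux : (u, x) ∈ E) (hxw : Reaches E x w) : Reaches E u w :=
  (Reaches.single hux).trans hxw

@[elab_as_elim]
theorem Reaches.head_induction {motive : ∀ u, Reaches E u w → Prop} (h : Reaches E u w)
    (refl : motive w (.refl E w))
    (head : ∀ x y (hxy : (x, y) ∈ E) (hyw : Reaches E y w),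
      motive y hyw → motive x (hyw.head hxy)) :
    motive u h := by
  induction h using Reaches.tail_induction with
  | refl => exact refl
  | tail x y _ hxy ih =>
    exact ih (head x y hxy (.refl E y) refl) fun a b hab hbx ↦ head a b hab (hbx.tail hxy)

theorem Reaches.exists_entering_edge {R : Set V} (h : Reaches E u w) (hu : u ∉ R) (hw : w ∈ R) :
    ∃ x y, (x, y) ∈ E ∧ x ∉ R ∧ y ∈ R := by
  induction h using Reaches.tail_induction with
  | refl => exact absurd hw hu
  | tail x y _ hxy ih =>
    by_cases hx : x ∈ R
    · exact ih hx
    · exact ⟨x, y, hxy, hx, hw⟩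

theorem twoEdgeConn_iff_twoEdgeConnFrom :
    TwoEdgeConn E u w ↔ TwoEdgeConnFrom E u w ∧ TwoEdgeConnFrom E w u := by
  constructor
  · rintro (rfl | h)
    · exact ⟨fun _ _ ↦ .refl _ _, fun _ _ ↦ .refl _ _⟩
    · exact ⟨fun e he ↦ (h e he).1, fun e he ↦ (h e he).2⟩
  · exact fun ⟨huw, hwu⟩ ↦ .inr fun e he ↦ ⟨huw e he, hwu e he⟩

end Walks

section Gates

/-- The edges of the subgraph of `E` induced on the vertex set `R`. -/
def inducedEdges (E : Set (V × V)) (R : Set V) : Set (V × V) :=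
  {e ∈ E | e.1 ∈ R ∧ e.2 ∈ R}

/-- `(p, q)` is the only edge of `E` entering the region `R`. Applied to `Rᶜ`, it says that `(p, q)`
is the only edge leaving `R`. -/
structure IsSoleEntry (E : Set (V × V)) (R : Set V) (p q : V) : Prop where
  mem : (p, q) ∈ E
  source_notMem : p ∉ R
  target_mem : q ∈ R
  eq_of_enter : ∀ x y, (x, y) ∈ E → x ∉ R → y ∈ R → x = p ∧ y = q

/-- The region `R` is entered through a single edge, which ends at `q`, or left through a single
edge, which starts at `q`. These are the regions contracted, to `q`, in an auxiliary graph. -/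
def IsGated (E : Set (V × V)) (R : Set V) (q : V) : Prop :=
  (∃ p, IsSoleEntry E R p q) ∨ ∃ p, IsSoleEntry E Rᶜ q p

variable {E : Set (V × V)} {R : Set V} {p q v w x y : V}

theorem inducedEdges_compl_subset_diff (hxy : x ∈ R ∨ y ∈ R) :
    inducedEdges E Rᶜ ⊆ E \ {(x, y)} := by
  rintro e ⟨he, hx, hy⟩
  refine ⟨he, ?_⟩
  rintro rfl
  exact hxy.elim hx hy

namespace IsSoleEntry

theorem notMem_of_reaches (h : IsSoleEntry E R p q) (hv : v ∉ R)
    (hvw : Reaches (E \ {(p, q)}) v w) : w ∉ R := by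
  intro hw
  obtain ⟨x, y, ⟨hxy, hne⟩, hx, hy⟩ := hvw.exists_entering_edge hv hw
  obtain ⟨rfl, rfl⟩ := h.eq_of_enter x y hxy hx hy
  exact hne rfl

theorem reaches_induced_compl (h : IsSoleEntry E R p q) (hv : v ∉ R)
    (hvw : Reaches (E \ {(p, q)}) v w) : Reaches (inducedEdges E Rᶜ) v w := by
  induction hvw using Reaches.tail_induction with
  | refl => exact .refl _ _
  | tail x y hvx hxy ih =>
    have hx : x ∉ R := h.notMem_of_reaches hv hvx
    have hy : y ∉ R := h.notMem_of_reaches hv (hvx.tail hxy)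
    exact ih.tail ⟨hxy.1, hx, hy⟩

theorem reaches_induced (h : IsSoleEntry E R p q) (hw : w ∈ R)
    (hvw : Reaches (E \ {(p, q)}) v w) : Reaches (inducedEdges E R) v w := by
  induction hvw using Reaches.head_induction with
  | refl => exact .refl _ _
  | head x y hxy hyw ih =>
    have hy : y ∈ R := by_contra fun hy ↦ h.notMem_of_reaches hy hyw hw
    have hx : x ∈ R := by_contra fun hx ↦ h.notMem_of_reaches hx (hyw.head hxy) hw
    exact ih.head ⟨hxy.1, hx, hy⟩

theorem reaches_induced_from_target (h : IsSoleEntry E R p q) (hx : x ∈ R)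
    (hqx : Reaches E q x) : Reaches (inducedEdges E R) q x := by
  induction hqx using Reaches.tail_induction with
  | refl => exact .refl _ _
  | tail a b _ hab ih =>
    by_cases ha : a ∈ R
    · exact (ih ha).tail ⟨hab, ha, hx⟩
    · obtain ⟨-, rfl⟩ := h.eq_of_enter a b hab ha hx
      exact .refl _ _

theorem reaches_induced_compl_to_source (h : IsSoleEntry E R p q) (hx : x ∉ R)
    (hxp : Reaches E x p) : Reaches (inducedEdges E Rᶜ) x p := by
  induction hxp using Reaches.head_induction with
  | refl => exact .refl _ _
  | head a b hab _ ih =>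
    by_cases hb : b ∈ R
    · obtain ⟨rfl, -⟩ := h.eq_of_enter a b hab hx hb
      exact .refl _ _
    · exact (ih hb).head ⟨hab, hx, hb⟩

end IsSoleEntry

theorem TwoEdgeConnFrom.reaches_induced_compl (h : TwoEdgeConnFrom E v w) (hR : IsGated E R q)
    (hv : v ∉ R) (hw : w ∉ R) : Reaches (inducedEdges E Rᶜ) v w := by
  rcases hR with ⟨p, hR⟩ | ⟨p, hR⟩
  · exact hR.reaches_induced_compl hv (h _ hR.mem)
  · exact hR.reaches_induced hw (h _ hR.mem)

theorem IsGated.mem (hR : IsGated E R q) : q ∈ R := by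
  rcases hR with ⟨p, hR⟩ | ⟨p, hR⟩
  · exact hR.target_mem
  · exact not_not.1 hR.source_notMem

theorem IsGated.reaches_source (hR : IsGated E R q) (hsc : StronglyConnected E)
    (hxy : (x, y) ∈ E) (hx : x ∈ R) (hy : y ∉ R) : Reaches (inducedEdges E R) q x := by
  rcases hR with ⟨p, hR⟩ | ⟨p, hR⟩
  · exact hR.reaches_induced_from_target hx (hsc q x)
  · obtain ⟨rfl, -⟩ := hR.eq_of_enter x y hxy (not_not.2 hx) hy
    exact .refl _ _

theorem IsGated.reaches_of_target (hR : IsGated E R q) (hsc : StronglyConnected E)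
    (hxy : (x, y) ∈ E) (hx : x ∉ R) (hy : y ∈ R) : Reaches (inducedEdges E R) y q := by
  rcases hR with ⟨p, hR⟩ | ⟨p, hR⟩
  · obtain ⟨-, rfl⟩ := hR.eq_of_enter x y hxy hx hy
    exact .refl _ _
  · simpa only [compl_compl] using
      hR.reaches_induced_compl_to_source (not_not.2 hy) (hsc y q)

end Gates

section Contraction

/-- The image of the digraph `E` under `c`, where a loop is kept only if it sits at a vertex
of `T`. -/
def contractEdges (E : Set (V × V)) (c : V → V) (T : Set V) : Set (V × V) :=
  {e | ∃ x y, (x, y) ∈ E ∧ (c x ≠ c y ∨ c x ∈ T) ∧ e = (c x, c y)}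

/-- `c` fixes the vertices of `T` and collapses the rest of the digraph `E`, without meeting `T`,
onto representatives of gated regions, the fibers of `c`. -/
structure IsGatedContraction (E : Set (V × V)) (c : V → V) (T : Set V) : Prop where
  map_of_mem : ∀ x ∈ T, c x = x
  map_notMem : ∀ x ∉ T, c x ∉ T
  isGated : ∀ x ∉ T, IsGated E (c ⁻¹' {c x}) (c x)

variable {E F F' : Set (V × V)} {c : V → V} {T S : Set V} {a b p q v w x y : V}

theorem mem_contractEdges_of_map_eq (hxy : (x, y) ∈ E) (hx : c x = a) (hy : c y = b)
    (hab : a ≠ b ∨ a ∈ T) : (a, b) ∈ contractEdges E c T := by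
  subst hx hy
  exact ⟨x, y, hxy, hab, rfl⟩

theorem IsSoleEntry.contractEdges (h : IsSoleEntry E (c ⁻¹' S) p q) :
    IsSoleEntry (contractEdges E c T) S (c p) (c q) where
  mem := ⟨p, q, h.mem, .inl fun hpq ↦ h.source_notMem (hpq ▸ h.target_mem : c p ∈ S), rfl⟩
  source_notMem := h.source_notMem
  target_mem := h.target_mem
  eq_of_enter := by
    rintro _ _ ⟨x, y, hxy, -, hab⟩ hx hy
    obtain ⟨rfl, rfl⟩ := Prod.mk.inj hab
    obtain ⟨rfl, rfl⟩ := h.eq_of_enter x y hxy hx hy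
    exact ⟨rfl, rfl⟩

theorem IsGated.contractEdges (h : IsGated E (c ⁻¹' {q}) q) :
    IsGated (contractEdges E c T) {q} q := by
  have hq : c q = q := h.mem
  rcases h with ⟨p, h⟩ | ⟨p, h⟩
  · exact .inl ⟨c p, by simpa only [hq] using h.contractEdges (T := T)⟩
  · rw [← Set.preimage_compl] at h
    exact .inr ⟨c p, by simpa only [hq] using h.contractEdges (T := T)⟩

theorem Reaches.map (h : Reaches F v w)
    (hF : ∀ x y, (x, y) ∈ F → c x = c y ∨ (c x, c y) ∈ F') : Reaches F' (c v) (c w) := by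
  induction h using Reaches.tail_induction with
  | refl => exact .refl _ _
  | tail x y _ hxy ih =>
    rcases hF x y hxy with heq | hmem
    · exact heq ▸ ih
    · exact ih.tail hmem

namespace IsGatedContraction

theorem eq_of_map_eq_mem (h : IsGatedContraction E c T) {t : V} (ht : t ∈ T) (hx : c x = t) :
    x = t := by
  by_cases hxT : x ∈ T
  · rw [← hx, h.map_of_mem x hxT]
  · exact absurd (hx ▸ ht) (h.map_notMem x hxT)

theorem reaches_source (h : IsGatedContraction E c T) (hsc : StronglyConnected E)
    (hxy : (x, y) ∈ E) (hne : c x ≠ c y ∨ c x ∈ T)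
    (hF : ∀ e ∈ inducedEdges E (c ⁻¹' {c x}), c x ∉ T → e ∈ F) : Reaches F (c x) x := by
  by_cases hx : x ∈ T
  · rw [h.map_of_mem x hx]
    exact .refl _ _
  · have hcx : c x ∉ T := h.map_notMem x hx
    have hcy : c y ≠ c x := (hne.resolve_right hcx).symm
    exact ((h.isGated x hx).reaches_source hsc hxy rfl hcy).mono fun e he ↦ hF e he hcx

theorem reaches_of_target (h : IsGatedContraction E c T) (hsc : StronglyConnected E)
    (hxy : (x, y) ∈ E) (hne : c x ≠ c y ∨ c x ∈ T)
    (hF : ∀ e ∈ inducedEdges E (c ⁻¹' {c y}), c y ∉ T → e ∈ F) : Reaches F y (c y) := by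
  by_cases hy : y ∈ T
  · rw [h.map_of_mem y hy]
    exact .refl _ _
  · have hcy : c y ∉ T := h.map_notMem y hy
    have hcx : c x ≠ c y := hne.elim id fun hx heq ↦ hcy (heq ▸ hx)
    exact ((h.isGated y hy).reaches_of_target hsc hxy hcx rfl).mono fun e he ↦ hF e he hcy

theorem reaches_lift (h : IsGatedContraction E c T) (hsc : StronglyConnected E)
    (hF' : F' ⊆ contractEdges E c T)
    (hcross : ∀ x y, (x, y) ∈ E → (c x, c y) ∈ F' → (x, y) ∈ F)
    (hfiber : ∀ a b, (a, b) ∈ F' → ∀ q ∉ T, q = a ∨ q = b → inducedEdges E (c ⁻¹' {q}) ⊆ F)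
    (hvw : Reaches F' v w) : Reaches F v w := by
  induction hvw using Reaches.tail_induction with
  | refl => exact .refl _ _
  | tail a b _ hab ih =>
    obtain ⟨x, y, hxy, hne, heq⟩ := hF' hab
    obtain ⟨rfl, rfl⟩ := Prod.mk.inj heq
    have hax : Reaches F (c x) x := h.reaches_source hsc hxy hne
      fun e he hT ↦ hfiber _ _ hab _ hT (.inl rfl) he
    have hyb : Reaches F y (c y) := h.reaches_of_target hsc hxy hne
      fun e he hT ↦ hfiber _ _ hab _ hT (.inr rfl) he
    exact ih.trans ((hax.tail (hcross x y hxy hab)).trans hyb)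

theorem map_mem_iff (h : IsGatedContraction E c T) : c x ∈ T ↔ x ∈ T :=
  ⟨fun hx ↦ by_contra fun hxT ↦ h.map_notMem x hxT hx, fun hx ↦ (h.map_of_mem x hx).symm ▸ hx⟩

theorem reaches_inducedEdges_iff (h : IsGatedContraction E c T) (hsc : StronglyConnected E)
    (S : Set V) (hv : v ∈ T) (hw : w ∈ T) :
    Reaches (inducedEdges E (c ⁻¹' S)) v w ↔
      Reaches (inducedEdges (contractEdges E c T) S) v w := by
  constructor
  · intro hvw
    rw [← h.map_of_mem v hv, ← h.map_of_mem w hw]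
    refine hvw.map ?_
    rintro x y ⟨hxy, hx, hy⟩
    exact or_iff_not_imp_left.2 fun hne ↦ ⟨⟨x, y, hxy, .inl hne, rfl⟩, hx, hy⟩
  · refine h.reaches_lift hsc (fun e he ↦ he.1) ?_ ?_
    · exact fun x y hxy ⟨_, hx, hy⟩ ↦ ⟨hxy, hx, hy⟩
    · rintro a b ⟨-, ha, hb⟩ q - hq e ⟨he, he₁, he₂⟩
      have hqS : {q} ⊆ S := Set.singleton_subset_iff.2 (by rcases hq with rfl | rfl <;> assumption)
      exact ⟨he, Set.preimage_mono hqS he₁, Set.preimage_mono hqS he₂⟩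

theorem reaches_diff_singleton_iff (h : IsGatedContraction E c T) (hsc : StronglyConnected E)
    (hx : x ∈ T) (hy : y ∈ T) (hv : v ∈ T) (hw : w ∈ T) :
    Reaches (E \ {(x, y)}) v w ↔ Reaches (contractEdges E c T \ {(x, y)}) v w := by
  constructor
  · intro hvw
    rw [← h.map_of_mem v hv, ← h.map_of_mem w hw]
    refine hvw.map ?_
    rintro a b ⟨hab, hne⟩
    refine or_iff_not_imp_left.2 fun hcab ↦ ⟨⟨a, b, hab, .inl hcab, rfl⟩, fun heq ↦ hne ?_⟩
    obtain ⟨hax, hby⟩ := Prod.mk.inj heq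
    exact Prod.ext (h.eq_of_map_eq_mem hx hax) (h.eq_of_map_eq_mem hy hby)
  · refine h.reaches_lift hsc Set.sdiff_subset ?_ ?_
    · rintro a b hab ⟨-, hne⟩
      refine ⟨hab, fun heq ↦ hne ?_⟩
      obtain ⟨rfl, rfl⟩ := Prod.mk.inj heq
      exact Prod.ext (h.map_of_mem a hx) (h.map_of_mem b hy)
    · rintro a b - q hq - e ⟨he, heq, -⟩
      refine ⟨he, ?_⟩
      rintro rfl
      have hcx : c x = q := heq
      exact hq (hcx ▸ h.map_mem_iff.2 hx)

theorem twoEdgeConnFrom_iff (h : IsGatedContraction E c T) (hsc : StronglyConnected E)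
    (hv : v ∈ T) (hw : w ∈ T) :
    TwoEdgeConnFrom E v w ↔ TwoEdgeConnFrom (contractEdges E c T) v w := by
  have hne : ∀ t ∈ T, ∀ z ∉ T, c t ≠ c z := fun t ht z hz htz ↦
    h.map_notMem z hz (htz ▸ h.map_mem_iff.2 ht)
  have hne' : ∀ t ∈ T, ∀ z ∉ T, t ≠ c z := fun t ht z hz ↦ h.map_of_mem t ht ▸ hne t ht z hz
  constructor
  · rintro hvw _ ⟨x, y, hxy, -, rfl⟩
    have avoid : ∀ z ∉ T, Reaches (inducedEdges (contractEdges E c T) {c z}ᶜ) v w := fun z hz ↦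
      (h.reaches_inducedEdges_iff hsc {c z}ᶜ hv hw).1 <|
        hvw.reaches_induced_compl (h.isGated z hz) (hne v hv z hz) (hne w hw z hz)
    by_cases hx : x ∈ T
    · by_cases hy : y ∈ T
      · rw [h.map_of_mem x hx, h.map_of_mem y hy]
        exact (h.reaches_diff_singleton_iff hsc hx hy hv hw).1 (hvw _ hxy)
      · exact (avoid y hy).mono (inducedEdges_compl_subset_diff (.inr rfl))
    · exact (avoid x hx).mono (inducedEdges_compl_subset_diff (.inl rfl))
  · rintro hvw ⟨x, y⟩ hxy
    have avoid : ∀ z ∉ T, Reaches (inducedEdges E (c ⁻¹' {c z})ᶜ) v w := fun z hz ↦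
      (h.reaches_inducedEdges_iff hsc {c z}ᶜ hv hw).2 <|
        hvw.reaches_induced_compl (h.isGated z hz).contractEdges (hne' v hv z hz) (hne' w hw z hz)
    by_cases hx : x ∈ T
    · by_cases hy : y ∈ T
      · exact (h.reaches_diff_singleton_iff hsc hx hy hv hw).2 <|
          hvw _ <|
            mem_contractEdges_of_map_eq hxy (h.map_of_mem x hx) (h.map_of_mem y hy) (.inr hx)
      · exact (avoid y hy).mono (inducedEdges_compl_subset_diff (.inr rfl))
    · exact (avoid x hx).mono (inducedEdges_compl_subset_diff (.inl rfl))

end IsGatedContraction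

end Contraction

section Dominators

/-- The set of vertices dominated by `u`: the subtree of `u` in the dominator tree. -/
def dominated (E : Set (V × V)) (s u : V) : Set V :=
  {x | Dominates E s u x}

variable {E : Set (V × V)} {s a b u v x y : V}

theorem Dominates.refl (E : Set (V × V)) (s a : V) : Dominates E s a a :=
  fun _ hp ↦ List.mem_of_getLast? hp.2.1

theorem Dominates.start (E : Set (V × V)) (s a : V) : Dominates E s s a :=
  fun _ hp ↦ List.mem_of_head? hp.1

theorem Dominates.trans (hab : Dominates E s a b) (hbx : Dominates E s b x) :
    Dominates E s a x := fun p hp ↦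
  let ⟨q, hqp, hq⟩ := hp.exists_subset_of_mem b (hbx p hp)
  hqp (hab q hq)

instance isTrans_dominates (E : Set (V × V)) (s : V) : IsTrans V (Dominates E s) :=
  ⟨fun _ _ _ ↦ Dominates.trans⟩

theorem Dominates.eq_start (h : Dominates E s a s) : a = s := by
  simpa using h [s] (isPathFrom_singleton E s)

theorem Dominates.eq_of_enter (hy : Dominates E s u y) (hxy : (x, y) ∈ E)
    (hx : ¬ Dominates E s u x) : y = u := by
  by_contra hne
  refine hx fun p hp ↦ (List.mem_append.1 (hy _ (hp.concat hxy))).resolve_right ?_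
  simpa using Ne.symm hne

theorem reaches_induced_compl_dominated (hx : ¬ Dominates E s u x) :
    Reaches (inducedEdges E (dominated E s u)ᶜ) s x := by
  simp only [Dominates, not_forall] at hx
  obtain ⟨p, hp, hup⟩ := hx
  refine hp.concat_induction (motive := fun x p ↦ u ∉ p →
    Reaches (inducedEdges E (dominated E s u)ᶜ) s x) (fun _ ↦ .refl _ _) ?_ hup
  intro a b p hpa hab ih hu
  have hup : u ∉ p := fun h ↦ hu (List.mem_append_left _ h)
  exact (ih hup).tail ⟨hab, fun ha ↦ hup (ha p hpa), fun hb ↦ hu (hb _ (hpa.concat hab))⟩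

theorem Dominates.antisymm (hab : Dominates E s a b) (hba : Dominates E s b a)
    (ha : Reaches E s a) : a = b := by
  by_cases hs : Dominates E s a s
  · rw [hs.eq_start, (hba.trans hs).eq_start]
  · obtain ⟨x, y, hxy, hx, hy⟩ :=
      ha.exists_entering_edge (R := dominated E s a) hs (.refl E s a)
    rw [← hy.eq_of_enter hxy hx, ← (hba.trans hy).eq_of_enter hxy fun h ↦ hx (hab.trans h)]

theorem Dominates.total (hax : Dominates E s a x) (hbx : Dominates E s b x)
    (hx : Reaches E s x) : Dominates E s a b ∨ Dominates E s b a := by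
  induction hx using Reaches.tail_induction with
  | refl => exact .inl (hax.eq_start ▸ .start E s b)
  | tail x y _ hxy ih =>
    by_cases ha : Dominates E s a x
    · by_cases hb : Dominates E s b x
      · exact ih ha hb
      · exact .inl (hbx.eq_of_enter hxy hb ▸ hax)
    · exact .inr (hax.eq_of_enter hxy ha ▸ hbx)

theorem finite_dominators (hv : Reaches E s v) : {x | Dominates E s x v}.Finite :=
  let ⟨p, hp⟩ := hv
  p.finite_toSet.subset fun _ hx ↦ hx p hp

theorem exists_deepest_dominator {S : Set V} (hS : S.Nonempty)
    (hSv : ∀ x ∈ S, Dominates E s x v) (hv : Reaches E s v) :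
    ∃ m ∈ S, ∀ x ∈ S, Dominates E s x m := by
  have : Nonempty S := hS.to_subtype
  have : Finite S := (finite_dominators hv).subset hSv
  have hdir : Directed (Dominates E s) ((↑) : S → V) := fun a b ↦
    ((hSv a a.2).total (hSv b b.2) hv).elim (fun hab ↦ ⟨b, hab, .refl E s b⟩)
      fun hba ↦ ⟨a, .refl E s a, hba⟩
  obtain ⟨m, hm⟩ := hdir.finite_le id
  exact ⟨m, m.2, fun x hx ↦ hm ⟨x, hx⟩⟩

theorem exists_shallowest_dominator {S : Set V} (hS : S.Nonempty)
    (hSv : ∀ x ∈ S, Dominates E s x v) (hv : Reaches E s v) :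
    ∃ m ∈ S, ∀ x ∈ S, Dominates E s m x := by
  have : Nonempty S := hS.to_subtype
  have : Finite S := (finite_dominators hv).subset hSv
  have hdir : Directed (Function.swap (Dominates E s)) ((↑) : S → V) := fun a b ↦
    ((hSv a a.2).total (hSv b b.2) hv).elim (fun hab ↦ ⟨a, .refl E s a, hab⟩)
      fun hba ↦ ⟨b, hba, .refl E s b⟩
  obtain ⟨m, hm⟩ := hdir.finite_le id
  exact ⟨m, m.2, fun x hx ↦ hm ⟨x, hx⟩⟩

end Dominators

section Bridges

variable {E : Set (V × V)} {s d u v w x y z : V}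

namespace IsBridge

theorem not_reaches (h : IsBridge E s u z) : ¬ Reaches (E \ {(u, z)}) s z := fun ⟨p, hp⟩ ↦
  (hp.mem_of_mem_zip_tail (h.2 p (hp.mono Set.sdiff_subset))).2 rfl

theorem ne_start (h : IsBridge E s u z) : z ≠ s := by
  rintro rfl
  exact h.not_reaches (.refl _ _)

theorem eq_of_enter (h : IsBridge E s u z) (hxy : (x, y) ∈ E) (hx : ¬ Dominates E s z x)
    (hy : Dominates E s z y) : x = u ∧ y = z := by
  obtain rfl : y = z := hy.eq_of_enter hxy hx
  refine ⟨by_contra fun hxu ↦ h.not_reaches ?_, rfl⟩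
  have hsx : Reaches (E \ {(u, y)}) s x := (reaches_induced_compl_dominated hx).mono
    (inducedEdges_compl_subset_diff (.inr hy))
  exact hsx.tail ⟨hxy, fun heq ↦ hxu (Prod.mk.inj heq).1⟩

theorem isSoleEntry (h : IsBridge E s u z) (hz : Reaches E s z) :
    IsSoleEntry E (dominated E s z) u z where
  mem := h.1
  source_notMem := by
    obtain ⟨x, y, hxy, hx, hy⟩ := hz.exists_entering_edge (R := dominated E s z)
      (fun hs ↦ h.ne_start hs.eq_start) (.refl E s z)
    obtain ⟨rfl, -⟩ := h.eq_of_enter hxy hx hy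
    exact hx
  target_mem := .refl E s z
  eq_of_enter _ _ := h.eq_of_enter

theorem not_dominates (h : IsBridge E s u z) (hz : Reaches E s z) : ¬ Dominates E s z u :=
  (h.isSoleEntry hz).source_notMem

theorem immDomIs (h : IsBridge E s u z) (hz : Reaches E s z) : ImmDomIs E s z u := by
  refine ⟨by_contra fun hu ↦ h.not_reaches ?_, ?_, fun x hx hxz ↦ by_contra fun hxu ↦ ?_⟩
  · exact (reaches_induced_compl_dominated hu).mono
      (inducedEdges_compl_subset_diff (.inl (.refl E s u)))
  · rintro rfl
    exact h.not_dominates hz (.refl E s u)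
  · exact hxz (hx.eq_of_enter h.1 hxu).symm

end IsBridge

theorem ImmDomIs.unique (hx : ImmDomIs E s w x) (hy : ImmDomIs E s w y)
    (hsx : Reaches E s x) : x = y :=
  (hy.2.2 x hx.1 hx.2.1).antisymm (hx.2.2 y hy.1 hy.2.1) hsx

theorem marked_and_immDomIs_iff_isBridge (hs : ∀ x, Reaches E s x) :
    Marked E s z ∧ ImmDomIs E s z d ↔ IsBridge E s d z := by
  constructor
  · rintro ⟨⟨u, hu⟩, hd⟩
    exact (hu.immDomIs (hs z)).unique hd (hs u) ▸ hu
  · exact fun h ↦ ⟨⟨d, h⟩, h.immDomIs (hs z)⟩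

theorem not_marked_start : ¬ Marked E s s :=
  fun ⟨_, h⟩ ↦ h.ne_start rfl

theorem TwoEdgeConnFrom.dominates (h : TwoEdgeConnFrom E v w) (hs : ∀ x, Reaches E s x)
    (hz : Marked E s z) (hw : Dominates E s z w) : Dominates E s z v := by
  obtain ⟨u, hu⟩ := hz
  exact by_contra fun hv ↦ (hu.isSoleEntry (hs z)).notMem_of_reaches hv (h _ hu.1) hw

end Bridges

section AuxiliaryGraph

variable {E : Set (V × V)} {s r d v w x y z z' : V}

theorem mem_Tset_iff (hr : IsRoot E s r) :
    x ∈ Tset E s r ↔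
      Dominates E s r x ∧ ∀ y, Marked E s y → Dominates E s y x → Dominates E s y r := by
  constructor
  · rintro (⟨-, hrx, hdeep⟩ | ⟨rfl, hnone⟩)
    · exact ⟨hrx, hdeep⟩
    · exact ⟨.start E r x, fun y hy hyx ↦ absurd hyx (hnone y hy)⟩
  · rintro ⟨hrx, hdeep⟩
    rcases hr with rfl | hr
    · exact .inr ⟨rfl, fun y hy hyx ↦ not_marked_start ((hdeep y hy hyx).eq_start ▸ hy)⟩
    · exact .inl ⟨hr, hrx, hdeep⟩

theorem exists_isRoot_mem_Tset (hv : Reaches E s v) : ∃ r, IsRoot E s r ∧ v ∈ Tset E s r := by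
  by_cases hne : ∃ x, Marked E s x ∧ Dominates E s x v
  · obtain ⟨r, ⟨hr, hrv⟩, hdeep⟩ :=
      exists_deepest_dominator (S := {x | Marked E s x ∧ Dominates E s x v}) hne
        (fun _ hx ↦ hx.2) hv
    exact ⟨r, .inr hr, .inl ⟨hr, hrv, fun x hx hxv ↦ hdeep x ⟨hx, hxv⟩⟩⟩
  · exact ⟨s, .inl rfl, .inr ⟨rfl, fun x hx hxv ↦ hne ⟨x, hx, hxv⟩⟩⟩

theorem TwoEdgeConn.mem_Tset (h : TwoEdgeConn E v w) (hs : ∀ x, Reaches E s x)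
    (hr : IsRoot E s r) (hv : v ∈ Tset E s r) : w ∈ Tset E s r := by
  obtain ⟨hvw, hwv⟩ := twoEdgeConn_iff_twoEdgeConnFrom.1 h
  rw [mem_Tset_iff hr] at hv ⊢
  refine ⟨?_, fun y hy hyw ↦ hv.2 y hy (hvw.dominates hs hy hyw)⟩
  rcases hr with rfl | hr
  · exact .start E r w
  · exact hwv.dominates hs hr hv.1

theorem root_mem_Tset (hr : IsRoot E s r) : r ∈ Tset E s r :=
  (mem_Tset_iff hr).2 ⟨.refl E s r, fun _ _ h ↦ h⟩

theorem Dominates.of_mem_Tset (hx : x ∈ Tset E s r) : Dominates E s r x := by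
  rcases hx with ⟨-, hrx, -⟩ | ⟨rfl, -⟩
  · exact hrx
  · exact .start E r x

namespace MarkedChildOfBoundary

theorem exists_isBridge (hz : MarkedChildOfBoundary E s r z) (hs : ∀ x, Reaches E s x) :
    ∃ p ∈ Tset E s r, IsBridge E s p z :=
  let ⟨hm, p, hp, hpz⟩ := hz
  ⟨p, hp, (marked_and_immDomIs_iff_isBridge hs).1 ⟨hm, hpz⟩⟩

theorem dominates (hz : MarkedChildOfBoundary E s r z) : Dominates E s r z :=
  let ⟨_, _, hp, hpz⟩ := hz
  (Dominates.of_mem_Tset hp).trans hpz.1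

theorem not_dominates_of_mem_Tset (hz : MarkedChildOfBoundary E s r z)
    (hs : ∀ x, Reaches E s x) (hr : IsRoot E s r) (hx : x ∈ Tset E s r) :
    ¬ Dominates E s z x := by
  intro hzx
  obtain ⟨p, hp, hpz⟩ := hz.exists_isBridge hs
  have hzr : Dominates E s z r := ((mem_Tset_iff hr).1 hx).2 z hz.1 hzx
  exact hpz.not_dominates (hs z) (hzr.trans (.of_mem_Tset hp))

theorem eq_of_dominates (hz : MarkedChildOfBoundary E s r z)
    (hz' : MarkedChildOfBoundary E s r z') (hs : ∀ x, Reaches E s x) (hr : IsRoot E s r)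
    (hzx : Dominates E s z x) (hzx' : Dominates E s z' x) : z = z' := by
  wlog hzz' : Dominates E s z z' generalizing z z'
  · exact (this hz' hz hzx' hzx ((hzx.total hzx' (hs x)).resolve_left hzz')).symm
  by_contra hne
  obtain ⟨-, p, hp, hpz'⟩ := hz'
  exact hz.not_dominates_of_mem_Tset hs hr hp (hpz'.2.2 z hzz' hne)

end MarkedChildOfBoundary

-- The witness is the shallowest marked vertex dominating `x` but not `r`.
theorem exists_markedChildOfBoundary_dominates (hs : ∀ x, Reaches E s x) (hr : IsRoot E s r)
    (hrx : Dominates E s r x) (hx : x ∉ Tset E s r) :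
    ∃ z, MarkedChildOfBoundary E s r z ∧ Dominates E s z x := by
  have hne : ∃ z, Marked E s z ∧ Dominates E s z x ∧ ¬ Dominates E s z r := by
    simpa [mem_Tset_iff hr, hrx] using hx
  obtain ⟨z, ⟨hz, hzx, hzr⟩, hshallow⟩ := exists_shallowest_dominator
    (S := {z | Marked E s z ∧ Dominates E s z x ∧ ¬ Dominates E s z r}) hne
    (fun _ hz ↦ hz.2.1) (hs x)
  obtain ⟨p, hp⟩ := id hz
  have hpz : ImmDomIs E s z p := hp.immDomIs (hs z)
  have hrz : Dominates E s r z := (hrx.total hzx (hs x)).resolve_right hzr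
  have hrp : Dominates E s r p := hpz.2.2 r hrz fun heq ↦ hzr (heq ▸ .refl E s z)
  refine ⟨z, ⟨hz, p, (mem_Tset_iff hr).2 ⟨hrp, fun y hy hyp ↦ by_contra fun hyr ↦ ?_⟩, hpz⟩, hzx⟩
  have hzy : Dominates E s z y := hshallow y ⟨hy, (hyp.trans hpz.1).trans hzx, hyr⟩
  exact hp.not_dominates (hs z) (hzy.trans hyp)

open Classical in
/-- The contraction of `G` onto the vertices of the auxiliary graph `G_r`, with `d` standing
for `d(r)`: vertices of `T(r)` are fixed, the vertices dominated by a marked child `z` of a boundary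
vertex go to `z`, and those not dominated by `r` go to `d`. -/
noncomputable def auxProj (E : Set (V × V)) (s r d x : V) : V :=
  if x ∈ Tset E s r then x
  else if h : ∃ z, MarkedChildOfBoundary E s r z ∧ Dominates E s z x then h.choose
  else d

theorem auxProj_of_mem (hx : x ∈ Tset E s r) : auxProj E s r d x = x :=
  if_pos hx

theorem auxProj_of_dominates (hs : ∀ x, Reaches E s x) (hr : IsRoot E s r)
    (hz : MarkedChildOfBoundary E s r z) (hzx : Dominates E s z x) : auxProj E s r d x = z := by
  have hx : x ∉ Tset E s r := fun hx ↦ hz.not_dominates_of_mem_Tset hs hr hx hzx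
  have hex : ∃ z, MarkedChildOfBoundary E s r z ∧ Dominates E s z x := ⟨z, hz, hzx⟩
  rw [auxProj, if_neg hx, dif_pos hex]
  exact hex.choose_spec.1.eq_of_dominates hz hs hr hex.choose_spec.2 hzx

theorem auxProj_of_not_dominates (hx : ¬ Dominates E s r x) : auxProj E s r d x = d := by
  rw [auxProj, if_neg fun hxT ↦ hx (.of_mem_Tset hxT),
    dif_neg fun ⟨_, hz, hzx⟩ ↦ hx (hz.dominates.trans hzx)]

theorem mem_Tset_or_exists_dominates_or_not_dominates (hs : ∀ x, Reaches E s x)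
    (hr : IsRoot E s r) (x : V) :
    x ∈ Tset E s r ∨ (∃ z, MarkedChildOfBoundary E s r z ∧ Dominates E s z x) ∨
      ¬ Dominates E s r x := by
  by_cases hx : x ∈ Tset E s r
  · exact .inl hx
  · exact .inr <| or_iff_not_imp_right.2 fun hrx ↦
      exists_markedChildOfBoundary_dominates hs hr (not_not.1 hrx) hx

theorem ne_start_of_not_dominates (hx : ¬ Dominates E s r x) : r ≠ s := by
  rintro rfl
  exact hx (.start E r x)

theorem dominates_auxProj_iff (hs : ∀ x, Reaches E s x) (hr : IsRoot E s r)
    (hd : r ≠ s → IsBridge E s d r) : Dominates E s r (auxProj E s r d x) ↔ Dominates E s r x := by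
  rcases mem_Tset_or_exists_dominates_or_not_dominates hs hr x with hx | ⟨z, hz, hzx⟩ | hx
  · rw [auxProj_of_mem hx]
  · rw [auxProj_of_dominates hs hr hz hzx]
    exact iff_of_true hz.dominates (hz.dominates.trans hzx)
  · rw [auxProj_of_not_dominates hx]
    exact iff_of_false ((hd (ne_start_of_not_dominates hx)).not_dominates (hs r)) hx

theorem auxProj_preimage_markedChild (hs : ∀ x, Reaches E s x) (hr : IsRoot E s r)
    (hd : r ≠ s → IsBridge E s d r) (hz : MarkedChildOfBoundary E s r z) :
    auxProj E s r d ⁻¹' {z} = dominated E s z := by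
  refine Set.Subset.antisymm (fun x hxz ↦ ?_) fun x hzx ↦ auxProj_of_dominates hs hr hz hzx
  replace hxz : auxProj E s r d x = z := hxz
  rcases mem_Tset_or_exists_dominates_or_not_dominates hs hr x with hx | ⟨z', hz', hzx'⟩ | hx
  · rw [auxProj_of_mem hx] at hxz
    exact hxz ▸ .refl E s x
  · rw [auxProj_of_dominates hs hr hz' hzx'] at hxz
    exact hxz ▸ hzx'
  · exact absurd ((dominates_auxProj_iff hs hr hd).1 (hxz ▸ hz.dominates)) hx

theorem auxProj_preimage_immDom (hs : ∀ x, Reaches E s x) (hd : IsBridge E s d r) :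
    auxProj E s r d ⁻¹' {d} = (dominated E s r)ᶜ := by
  refine Set.Subset.antisymm (fun x hxd hrx ↦ ?_) fun x hx ↦ auxProj_of_not_dominates hx
  replace hxd : auxProj E s r d x = d := hxd
  have hrd : Dominates E s r (auxProj E s r d x) :=
    (dominates_auxProj_iff hs (.inr ⟨d, hd⟩) fun _ ↦ hd).2 hrx
  exact hd.not_dominates (hs r) (hxd ▸ hrd)

theorem isGatedContraction_auxProj (hs : ∀ x, Reaches E s x) (hr : IsRoot E s r)
    (hd : r ≠ s → IsBridge E s d r) :
    IsGatedContraction E (auxProj E s r d) (Tset E s r) where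
  map_of_mem _ := auxProj_of_mem
  map_notMem x hx := by
    rcases mem_Tset_or_exists_dominates_or_not_dominates hs hr x with hxT | ⟨z, hz, hzx⟩ | hrx
    · exact absurd hxT hx
    · rw [auxProj_of_dominates hs hr hz hzx]
      exact fun hzT ↦ hz.not_dominates_of_mem_Tset hs hr hzT (.refl E s z)
    · exact fun hT ↦ hrx ((dominates_auxProj_iff hs hr hd).1 (.of_mem_Tset hT))
  isGated x hx := by
    rcases mem_Tset_or_exists_dominates_or_not_dominates hs hr x with hxT | ⟨z, hz, hzx⟩ | hrx
    · exact absurd hxT hx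
    · obtain ⟨p, -, hpz⟩ := hz.exists_isBridge hs
      rw [auxProj_of_dominates hs hr hz hzx, auxProj_preimage_markedChild hs hr hd hz]
      exact .inl ⟨p, hpz.isSoleEntry (hs z)⟩
    · have hdr : IsBridge E s d r := hd (ne_start_of_not_dominates hrx)
      rw [auxProj_of_not_dominates hrx, auxProj_preimage_immDom hs hdr]
      exact .inr ⟨r, (compl_compl (dominated E s r)).symm ▸ hdr.isSoleEntry (hs r)⟩

theorem auxEdges_subset_contractEdges (hs : ∀ x, Reaches E s x) (hr : IsRoot E s r)
    (hd : r ≠ s → IsBridge E s d r) :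
    auxEdges E s r d ⊆ contractEdges E (auxProj E s r d) (Tset E s r) := by
  have proj_child {x z} (hz : MarkedChildOfBoundary E s r z) (hzx : Dominates E s z x) :
      auxProj E s r d x = z := auxProj_of_dominates hs hr hz hzx
  rintro ⟨a, b⟩ (((((⟨hab, ha, hb⟩ | ⟨ha, hb, hab⟩) | ⟨hrs, heq⟩) | ⟨u, v, huv, hu, hv, heq⟩) |
    ⟨u, v, z, huv, hv, -, -, hz, hzu, heq⟩) | ⟨u, v, z, huv, -, -, hv, hz, hzu, heq⟩)
  · exact mem_contractEdges_of_map_eq hab (auxProj_of_mem ha) (auxProj_of_mem hb) (.inr ha)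
  · have hbridge : IsBridge E s a b := (marked_and_immDomIs_iff_isBridge hs).1 ⟨hb, hab⟩
    exact mem_contractEdges_of_map_eq hbridge.1 (auxProj_of_mem ha)
      (proj_child ⟨hb, a, ha, hab⟩ (.refl E s b)) (.inr ha)
  · have hrd : ¬ Dominates E s r d := (hd hrs).not_dominates (hs r)
    exact heq ▸ mem_contractEdges_of_map_eq (hd hrs).1 (auxProj_of_not_dominates hrd)
      (auxProj_of_mem (root_mem_Tset hr)) (.inl fun hdr ↦ hrd (hdr ▸ .refl E s d))
  · exact heq ▸ mem_contractEdges_of_map_eq huv (auxProj_of_mem hu)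
      (auxProj_of_not_dominates hv) (.inr hu)
  · have hzv : z ≠ v := fun h ↦ hz.not_dominates_of_mem_Tset hs hr hv (h ▸ .refl E s z)
    exact heq ▸ mem_contractEdges_of_map_eq huv (proj_child hz hzu) (auxProj_of_mem hv) (.inl hzv)
  · have hrd : ¬ Dominates E s r d := (hd (ne_start_of_not_dominates hv)).not_dominates (hs r)
    have hzd : z ≠ d := fun h ↦ hrd (h ▸ hz.dominates)
    exact heq ▸ mem_contractEdges_of_map_eq huv (proj_child hz hzu)
      (auxProj_of_not_dominates hv) (.inl hzd)

theorem mem_auxEdges_of_mem_Tset (hs : ∀ x, Reaches E s x) (hr : IsRoot E s r)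
    (hxy : (x, y) ∈ E) (hx : x ∈ Tset E s r) : (x, auxProj E s r d y) ∈ auxEdges E s r d := by
  rcases mem_Tset_or_exists_dominates_or_not_dominates hs hr y with hy | ⟨z, hz, hzy⟩ | hy
  · rw [auxProj_of_mem hy]
    exact .inl <| .inl <| .inl <| .inl <| .inl ⟨hxy, hx, hy⟩
  · obtain ⟨p, -, hpz⟩ := hz.exists_isBridge hs
    obtain ⟨rfl, rfl⟩ := hpz.eq_of_enter hxy (hz.not_dominates_of_mem_Tset hs hr hx) hzy
    rw [auxProj_of_dominates hs hr hz hzy]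
    exact .inl <| .inl <| .inl <| .inl <| .inr ⟨hx, hz.1, hpz.immDomIs (hs y)⟩
  · rw [auxProj_of_not_dominates hy]
    exact .inl <| .inl <| .inr ⟨x, y, hxy, hx, hy, rfl⟩

theorem mem_auxEdges_of_dominates (hs : ∀ x, Reaches E s x) (hr : IsRoot E s r)
    (hxy : (x, y) ∈ E) (hz : MarkedChildOfBoundary E s r z) (hzx : Dominates E s z x)
    (hne : z ≠ auxProj E s r d y) : (z, auxProj E s r d y) ∈ auxEdges E s r d := by
  have hrx : Dominates E s r x := hz.dominates.trans hzx
  have hx : x ∉ Tset E s r := fun hx ↦ hz.not_dominates_of_mem_Tset hs hr hx hzx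
  rcases mem_Tset_or_exists_dominates_or_not_dominates hs hr y with hy | ⟨z', hz', hzy'⟩ | hy
  · rw [auxProj_of_mem hy]
    exact .inl <| .inr ⟨x, y, z, hxy, hy, hrx, hx, hz, hzx, rfl⟩
  · rw [auxProj_of_dominates hs hr hz' hzy'] at hne
    have hzx' : ¬ Dominates E s z' x := fun h ↦ hne (hz.eq_of_dominates hz' hs hr hzx h)
    obtain ⟨p, hp, hpz'⟩ := hz'.exists_isBridge hs
    obtain ⟨rfl, -⟩ := hpz'.eq_of_enter hxy hzx' hzy'
    exact absurd hp hx
  · rw [auxProj_of_not_dominates hy]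
    exact .inr ⟨x, y, z, hxy, hrx, hx, hy, hz, hzx, rfl⟩

theorem mem_auxEdges_of_not_dominates (hr : IsRoot E s r) (hd : r ≠ s → IsBridge E s d r)
    (hxy : (x, y) ∈ E) (hx : ¬ Dominates E s r x) (hne : d ≠ auxProj E s r d y) :
    (d, auxProj E s r d y) ∈ auxEdges E s r d := by
  have hrs : r ≠ s := ne_start_of_not_dominates hx
  have hy : Dominates E s r y := by_contra fun hy ↦ hne (auxProj_of_not_dominates hy).symm
  obtain ⟨-, rfl⟩ := (hd hrs).eq_of_enter hxy hx hy
  rw [auxProj_of_mem (root_mem_Tset hr)]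
  exact .inl <| .inl <| .inl <| .inr ⟨hrs, rfl⟩

theorem contractEdges_subset_auxEdges (hs : ∀ x, Reaches E s x) (hr : IsRoot E s r)
    (hd : r ≠ s → IsBridge E s d r) :
    contractEdges E (auxProj E s r d) (Tset E s r) ⊆ auxEdges E s r d := by
  have hc := isGatedContraction_auxProj hs hr hd
  rintro _ ⟨x, y, hxy, hne, rfl⟩
  rw [hc.map_mem_iff, or_iff_not_imp_right] at hne
  by_cases hx : x ∈ Tset E s r
  · rw [auxProj_of_mem hx]
    exact mem_auxEdges_of_mem_Tset hs hr hxy hx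
  replace hne := hne hx
  by_cases hrx : Dominates E s r x
  · obtain ⟨z, hz, hzx⟩ := exists_markedChildOfBoundary_dominates hs hr hrx hx
    rw [auxProj_of_dominates hs hr hz hzx] at hne ⊢
    exact mem_auxEdges_of_dominates hs hr hxy hz hzx hne
  · rw [auxProj_of_not_dominates hrx] at hne ⊢
    exact mem_auxEdges_of_not_dominates hr hd hxy hrx hne

theorem twoEdgeConn_auxEdges_iff (hsc : StronglyConnected E) (hr : IsRoot E s r)
    (hd : r ≠ s → IsBridge E s d r) (hv : v ∈ Tset E s r) (hw : w ∈ Tset E s r) :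
    TwoEdgeConn (auxEdges E s r d) v w ↔ TwoEdgeConn E v w := by
  have hs : ∀ x, Reaches E s x := hsc s
  have hc : IsGatedContraction E (auxProj E s r d) (Tset E s r) :=
    isGatedContraction_auxProj hs hr hd
  have hEr : auxEdges E s r d = contractEdges E (auxProj E s r d) (Tset E s r) :=
    (auxEdges_subset_contractEdges hs hr hd).antisymm (contractEdges_subset_auxEdges hs hr hd)
  rw [twoEdgeConn_iff_twoEdgeConnFrom, twoEdgeConn_iff_twoEdgeConnFrom, hEr,
    hc.twoEdgeConnFrom_iff hsc hv hw, hc.twoEdgeConnFrom_iff hsc hw hv]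

end AuxiliaryGraph

theorem two_edge_connected_iff_in_aux_graph_general
    (E : Set (V × V)) (s : V) (hsc : StronglyConnected E) (dr : V → V)
    (hdr : ∀ r, Marked E s r → ImmDomIs E s r (dr r)) (v w : V) :
    TwoEdgeConn E v w ↔
      ∃ r, IsRoot E s r ∧ v ∈ Tset E s r ∧ w ∈ Tset E s r ∧
        TwoEdgeConn (auxEdges E s r (dr r)) v w := by
  have bridge {r} (hr : IsRoot E s r) (hrs : r ≠ s) : IsBridge E s (dr r) r :=
    have hm : Marked E s r := hr.resolve_left hrs
    (marked_and_immDomIs_iff_isBridge (hsc s)).1 ⟨hm, hdr r hm⟩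
  constructor
  · intro h
    obtain ⟨r, hr, hv⟩ := exists_isRoot_mem_Tset (hsc s v)
    have hw : w ∈ Tset E s r := h.mem_Tset (hsc s) hr hv
    exact ⟨r, hr, hv, hw, (twoEdgeConn_auxEdges_iff hsc hr (bridge hr) hv hw).2 h⟩
  · rintro ⟨r, hr, hv, hw, h⟩
    exact (twoEdgeConn_auxEdges_iff hsc hr (bridge hr) hv hw).1 h

/-- Two distinct vertices `v` and `w` are 2-edge-connected in `G` if and only if
there is a root `r` such that `v` and `w` are both ordinary vertices of the
auxiliary graph `G_r` (i.e. `v, w ∈ T(r)`) and they are 2-edge-connected in `G_r`. -/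
theorem two_edge_connected_iff_in_aux_graph
    {V : Type*} [Fintype V] (E : Set (V × V)) (s : V)
    (hsc : StronglyConnected E) (dr : V → V)
    (hdr : ∀ r, Marked E s r → ImmDomIs E s r (dr r))
    (v w : V) (hvw : v ≠ w) :
    TwoEdgeConn E v w ↔
      ∃ r, IsRoot E s r ∧ v ∈ Tset E s r ∧ w ∈ Tset E s r ∧
        TwoEdgeConn (auxEdges E s r (dr r)) v w :=
  two_edge_connected_iff_in_aux_graph_general E s hsc dr hdr v w
end

section
/- There exists a constant c such that every strongly connected digraph G = (V, E) with n vertices contains a spanning subgraph C = (V, E') with E' ⊆ E and |E'| ≤ c·n such that C is strongly connected and C has the same 2-edge-connected blocks as G; that is, for all vertices v, w: v ↔₂ₑ w in C if and only if v ↔₂ₑ w in G. -/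
variable {V : Type*}

/-!
Both connectivity notions are conditions on the number of edges leaving a vertex set `S`: this cut
must have at least one edge when `S` is proper and nonempty, and at least two when `S` separates a
2-edge-connected pair.

Suppose first that every cut with fewer than two edges has a single vertex on one side. Choose a
root `r` in a 2-edge-connected pair and put `k = 2`; if there is no such pair, let `r` be any vertex
and `k = 1`. Then among the sets avoiding `r` only singletons have fewer than `k` leaving edges.
Take an inclusion-minimal `C ⊆ F` that preserves the cuts around sets avoiding `r` up to the size
`k`. Each edge of `C` leaves a tight set, one with at most `k` edges of `C` leaving it. By
submodularity the tight sets containing a fixed `v` are closed under intersection, and all edges of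
`C` out of `v` leave the smallest of them, so `C` has out-degrees at most `k`. The same argument in
the reverse graph covers the sets containing `r`.

Otherwise there is a set `A` with `|A|, |Aᶜ| ≥ 2` left by at most one edge. Contracting `Aᶜ`, and
contracting `A`, gives two smaller graphs. No 2-edge-connected pair is separated by `A`, and
uncrossing with `A` shows that the union of certificates of the two graphs is a certificate.
-/

namespace SparseCertificate

open Finset

variable {W ε : Type*} {s t : ε → V} {F C C₁ C₂ : Finset ε} {S T A : Set V} {r v x y : V} {k : ℕ}

section Cuts

open Classical in
/-- The number of edges in `F` leaving `S`. A directed multigraph is given by the source and target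
maps `s t : ε → V` of its edges; this makes contraction of vertices a composition with a map on `V`
and reversal an exchange of `s` and `t`. -/
noncomputable def cutSize (s t : ε → V) (F : Finset ε) (S : Set V) : ℕ :=
  #{e ∈ F | s e ∈ S ∧ t e ∉ S}

theorem cutSize_compl (s t : ε → V) (F : Finset ε) (S : Set V) :
    cutSize s t F Sᶜ = cutSize t s F S :=
  congrArg card (by ext e; simp [and_comm])

theorem cutSize_mono (h : C ⊆ F) (S : Set V) : cutSize s t C S ≤ cutSize s t F S := by
  classical exact card_le_card (filter_subset_filter _ h)

theorem cutSize_inter_add_cutSize_union_le (s t : ε → V) (F : Finset ε) (S T : Set V) :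
    cutSize s t F (S ∩ T) + cutSize s t F (S ∪ T) ≤ cutSize s t F S + cutSize s t F T := by
  simp only [cutSize, card_filter, ← sum_add_distrib]
  refine sum_le_sum fun e _ => ?_
  by_cases s e ∈ S <;> by_cases s e ∈ T <;> by_cases t e ∈ S <;> by_cases t e ∈ T <;> simp [*]

theorem cutSize_pos_iff : 0 < cutSize s t F S ↔ ∃ e ∈ F, s e ∈ S ∧ t e ∉ S := by
  simp [cutSize, card_pos, Finset.Nonempty]

theorem cutSize_erase_add_one [DecidableEq ε] {e : ε} (he : e ∈ F) (hs : s e ∈ S) (ht : t e ∉ S) :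
    cutSize s t (F.erase e) S + 1 = cutSize s t F S := by
  rw [cutSize, filter_erase]
  exact card_erase_add_one (by simp [he, hs, ht])

theorem cutSize_erase_of_not_leaves [DecidableEq ε] {e : ε} (h : ¬(s e ∈ S ∧ t e ∉ S)) :
    cutSize s t (F.erase e) S = cutSize s t F S := by
  rw [cutSize, filter_erase, erase_eq_of_notMem (by simp [h]), cutSize]

theorem two_le_cutSize_iff_forall_erase [DecidableEq ε] (hpos : 0 < cutSize s t F S) :
    2 ≤ cutSize s t F S ↔ ∀ e ∈ F, 0 < cutSize s t (F.erase e) S := by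
  constructor
  · intro htwo e he
    by_cases hleaves : s e ∈ S ∧ t e ∉ S
    · have := cutSize_erase_add_one he hleaves.1 hleaves.2
      lia
    · rwa [cutSize_erase_of_not_leaves hleaves]
  · intro herase
    obtain ⟨e, he, hs, ht⟩ := cutSize_pos_iff.1 hpos
    have := cutSize_erase_add_one he hs ht
    have := herase e he
    lia

end Cuts

section RootedSparsification

/-- `C` preserves the cuts of `F` around sets avoiding the root `r`, up to the size `k`. -/
def PreservesCuts (s t : ε → V) (k : ℕ) (r : V) (F C : Finset ε) : Prop :=
  ∀ S, r ∉ S → min k (cutSize s t F S) ≤ cutSize s t C S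

theorem exists_tight_of_minimal (hmin : Minimal (PreservesCuts s t k r F) C) {e : ε} (he : e ∈ C) :
    ∃ S, r ∉ S ∧ s e ∈ S ∧ t e ∉ S ∧ cutSize s t C S ≤ k := by
  classical
  have herase : ¬PreservesCuts s t k r F (C.erase e) :=
    hmin.not_prop_of_lt (erase_ssubset he)
  simp only [PreservesCuts, not_forall, not_le] at herase
  obtain ⟨S, hrS, hlt⟩ := herase
  have hC := hmin.prop S hrS
  have hleaves : s e ∈ S ∧ t e ∉ S := by
    by_contra h
    rw [cutSize_erase_of_not_leaves h] at hlt
    lia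
  have := cutSize_erase_add_one he hleaves.1 hleaves.2
  exact ⟨S, hrS, hleaves.1, hleaves.2, by lia⟩

theorem PreservesCuts.cutSize_inter_le (hC : PreservesCuts s t k r F C)
    (hsmall : ∀ S, r ∉ S → cutSize s t F S < k → S.Subsingleton) (hrS : r ∉ S) (hrT : r ∉ T)
    (hvT : v ∈ T) (hS : cutSize s t C S ≤ k) (hT : cutSize s t C T ≤ k) :
    cutSize s t C (S ∩ T) ≤ k := by
  have hrST : r ∉ S ∪ T := by simp [hrS, hrT]
  by_cases hunion : cutSize s t F (S ∪ T) < k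
  · have hsub : (S ∪ T).Subsingleton := hsmall _ hrST hunion
    have hST : S ⊆ T := fun x hx => hsub (.inl hx) (.inr hvT) ▸ hvT
    rwa [Set.inter_eq_left.2 hST]
  · have := hC _ hrST
    have := cutSize_inter_add_cutSize_union_le s t C S T
    lia

open Classical in
theorem card_filter_source_le_of_minimal [Finite V]
    (hsmall : ∀ S, r ∉ S → cutSize s t F S < k → S.Subsingleton)
    (hmin : Minimal (PreservesCuts s t k r F) C) (v : V) : #{e ∈ C | s e = v} ≤ k := by
  let Tight (S : Set V) : Prop := r ∉ S ∧ v ∈ S ∧ cutSize s t C S ≤ k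
  have tight_of_edge {e : ε} (he : e ∈ {e ∈ C | s e = v}) : ∃ S, Tight S ∧ t e ∉ S := by
    obtain ⟨heC, rfl⟩ := mem_filter.1 he
    obtain ⟨S, hrS, hs, ht, hk⟩ := exists_tight_of_minimal hmin heC
    exact ⟨S, ⟨hrS, hs, hk⟩, ht⟩
  obtain hempty | ⟨e₀, he₀⟩ := {e ∈ C | s e = v}.eq_empty_or_nonempty
  · simp [hempty]
  obtain ⟨S₀, hS₀, -⟩ := tight_of_edge he₀
  obtain ⟨M, -, hM⟩ := exists_minimal_le_of_wellFoundedLT Tight S₀ hS₀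
  obtain ⟨hrM, hvM, hMk⟩ := hM.prop
  have least {S : Set V} (hS : Tight S) : M ⊆ S := by
    have hinter : Tight (M ∩ S) := ⟨fun h => hrM h.1, ⟨hvM, hS.2.1⟩,
      hmin.prop.cutSize_inter_le hsmall hrM hS.1 hS.2.1 hMk hS.2.2⟩
    exact (hM.le_of_le hinter Set.inter_subset_left).trans Set.inter_subset_right
  refine (card_le_card fun e he => ?_).trans hMk
  obtain ⟨S, hS, htS⟩ := tight_of_edge he
  obtain ⟨heC, rfl⟩ := mem_filter.1 he
  exact mem_filter.2 ⟨heC, hvM, fun htM => htS (least hS htM)⟩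

theorem exists_preservesCuts_card_le [Finite V]
    (hsmall : ∀ S, r ∉ S → cutSize s t F S < k → S.Subsingleton) :
    ∃ C ⊆ F, #C ≤ k * Nat.card V ∧ PreservesCuts s t k r F C := by
  classical
  cases nonempty_fintype V
  obtain ⟨C, hCF, hmin⟩ := exists_minimal_le_of_wellFoundedLT (PreservesCuts s t k r F) F
    fun S _ => min_le_right _ _
  refine ⟨C, hCF, ?_, hmin.prop⟩
  rw [Nat.card_eq_fintype_card]
  exact card_le_mul_card_image_of_maps_to (f := s) (fun _ _ => mem_univ _) k
    fun v _ => card_filter_source_le_of_minimal hsmall hmin v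

theorem exists_min_cutSize_le_card_le [Finite V]
    (hout : ∀ S, r ∉ S → cutSize s t F S < k → S.Subsingleton)
    (hin : ∀ S, r ∉ S → cutSize t s F S < k → S.Subsingleton) :
    ∃ C ⊆ F, #C ≤ 2 * k * Nat.card V ∧ ∀ S, min k (cutSize s t F S) ≤ cutSize s t C S := by
  classical
  obtain ⟨C₁, hC₁F, hcard₁, hC₁⟩ := exists_preservesCuts_card_le hout
  obtain ⟨C₂, hC₂F, hcard₂, hC₂⟩ := exists_preservesCuts_card_le hin
  refine ⟨C₁ ∪ C₂, union_subset hC₁F hC₂F, ?_, fun S => ?_⟩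
  · calc #(C₁ ∪ C₂) ≤ #C₁ + #C₂ := card_union_le _ _
      _ ≤ 2 * k * Nat.card V := by linarith
  · by_cases hrS : r ∈ S
    · have hcompl := hC₂ Sᶜ (by simpa using hrS)
      rw [cutSize_compl, cutSize_compl] at hcompl
      exact hcompl.trans (cutSize_mono subset_union_right S)
    · exact (hC₁ S hrS).trans (cutSize_mono subset_union_left S)

end RootedSparsification

section Certificates

/-- Strong connectivity in terms of cuts. -/
def IsStrong (s t : ε → V) (F : Finset ε) : Prop :=
  ∀ S : Set V, S.Nonempty → Sᶜ.Nonempty → 0 < cutSize s t F S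

/-- 2-edge-connectivity of `x` and `y` in terms of cuts: every cut separating them, in either
direction, has at least two edges. -/
def Linked (s t : ε → V) (F : Finset ε) (x y : V) : Prop :=
  ∀ S : Set V, (x ∈ S ↔ y ∉ S) → 2 ≤ cutSize s t F S

/-- The cut of `C` around `S` is as large as required of a certificate for `F`. -/
structure MeetsDemand (s t : ε → V) (F C : Finset ε) (S : Set V) : Prop where
  pos : S.Nonempty → Sᶜ.Nonempty → 0 < cutSize s t C S
  two_le : ∀ ⦃x y⦄, Linked s t F x y → x ∈ S → y ∉ S → 2 ≤ cutSize s t C S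

/-- `C` is a certificate for `F`: a strongly connected spanning subgraph in which all pairs linked
in `F` are still linked. -/
def IsCertificate (s t : ε → V) (F C : Finset ε) : Prop :=
  C ⊆ F ∧ ∀ S, MeetsDemand s t F C S

theorem Linked.symm (h : Linked s t F x y) : Linked s t F y x :=
  fun S hS => h S (by tauto)

theorem Linked.mono (hCF : C ⊆ F) (h : Linked s t C x y) : Linked s t F x y :=
  fun S hS => (h S hS).trans (cutSize_mono hCF S)

theorem Linked.map (p : V → W) (h : Linked s t F x y) : Linked (p ∘ s) (p ∘ t) F (p x) (p y) :=
  fun S hS => h (p ⁻¹' S) hS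

theorem Linked.mem_iff_mem (h : Linked s t F x y) (hA : cutSize s t F A ≤ 1) :
    x ∈ A ↔ y ∈ A := by
  by_contra hxy
  have := h A (by tauto)
  lia

theorem Linked.reverse (h : Linked s t F x y) : Linked t s F x y :=
  fun S hS => cutSize_compl s t F S ▸ h Sᶜ (not_congr hS)

theorem IsStrong.reverse (hF : IsStrong s t F) : IsStrong t s F :=
  fun S hS hSc => cutSize_compl s t F S ▸ hF Sᶜ hSc (by rwa [compl_compl])

theorem IsStrong.map (hF : IsStrong s t F) {p : V → W} (hp : p.Surjective) :
    IsStrong (p ∘ s) (p ∘ t) F :=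
  fun S hS hSc => hF (p ⁻¹' S) (hS.preimage hp) (hSc.preimage hp)

theorem MeetsDemand.mono (h : MeetsDemand s t F C₁ S) (hC : C₁ ⊆ C₂) :
    MeetsDemand s t F C₂ S where
  pos hS hSc := (h.pos hS hSc).trans_le (cutSize_mono hC S)
  two_le _ _ hxy hx hy := (h.two_le hxy hx hy).trans (cutSize_mono hC S)

theorem IsCertificate.isStrong (h : IsCertificate s t F C) : IsStrong s t C :=
  fun S => (h.2 S).pos

theorem IsCertificate.linked_iff (h : IsCertificate s t F C) :
    Linked s t C x y ↔ Linked s t F x y := by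
  refine ⟨.mono h.1, fun hxy S hS => ?_⟩
  by_cases hx : x ∈ S
  · exact (h.2 S).two_le hxy hx (hS.1 hx)
  · exact (h.2 S).two_le hxy.symm (by tauto) hx

theorem IsCertificate.meetsDemand_preimage {p : V → W}
    (h : IsCertificate (p ∘ s) (p ∘ t) F C) (S : Set W) : MeetsDemand s t F C (p ⁻¹' S) where
  pos hS hSc := (h.2 S).pos (Set.nonempty_of_nonempty_preimage hS)
    (Set.nonempty_of_nonempty_preimage hSc)
  two_le _ _ hxy hx hy := (h.2 S).two_le (hxy.map p) hx hy

theorem isCertificate_of_min_cutSize_le (hCF : C ⊆ F) (hF : IsStrong s t F) (hk : 1 ≤ k)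
    (hlinked : ∀ x y, x ≠ y → Linked s t F x y → 2 ≤ k)
    (hC : ∀ S, min k (cutSize s t F S) ≤ cutSize s t C S) : IsCertificate s t F C := by
  refine ⟨hCF, fun S => ⟨fun hS hSc => ?_, fun x y hxy hx hy => ?_⟩⟩
  · exact (lt_min hk (hF S hS hSc)).trans_le (hC S)
  · have hne : x ≠ y := fun h => hy (h ▸ hx)
    exact (le_min (hlinked x y hne hxy) (hxy S (by tauto))).trans (hC S)

theorem meetsDemand_of_uncrossing (hCF : C ⊆ F) (hA : cutSize s t F A ≤ 1)
    (hAne : A.Nonempty) (hAcne : Aᶜ.Nonempty)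
    (hin : ∀ S, S ⊆ A ∨ Aᶜ ⊆ S → MeetsDemand s t F C S)
    (hout : ∀ S, S ⊆ Aᶜ ∨ A ⊆ S → MeetsDemand s t F C S) (S : Set V) :
    MeetsDemand s t F C S := by
  by_cases hinter : S ⊆ Aᶜ
  · exact hout S (.inl hinter)
  by_cases hunion : Aᶜ ⊆ S
  · exact hin S (.inr hunion)
  have demand_inter := hin (S ∩ A) (.inl Set.inter_subset_right)
  have demand_union := hout (S ∪ A) (.inr Set.subset_union_right)
  have inter_pos : 0 < cutSize s t C (S ∩ A) :=
    demand_inter.pos (Set.not_disjoint_iff_nonempty_inter.1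
      (by rwa [← Set.subset_compl_iff_disjoint_right])) (hAcne.mono (by simp))
  have union_pos : 0 < cutSize s t C (S ∪ A) := by
    obtain ⟨z, hzA, hzS⟩ := Set.not_subset.1 hunion
    exact demand_union.pos (hAne.mono Set.subset_union_right) ⟨z, by simp_all⟩
  have submodular := cutSize_inter_add_cutSize_union_le s t C S A
  have hCA : cutSize s t C A ≤ 1 := (cutSize_mono hCF A).trans hA
  refine ⟨fun _ _ => by lia, fun x y hxy hxS hyS => ?_⟩
  have same_side : x ∈ A ↔ y ∈ A := hxy.mem_iff_mem hA
  by_cases hxA : x ∈ A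
  · have := demand_inter.two_le hxy ⟨hxS, hxA⟩ (fun h => hyS h.1)
    lia
  · have := demand_union.two_le hxy (.inl hxS) (by simp_all)
    lia

end Certificates

section Contraction

open Classical in
/-- The quotient map contracting `Aᶜ` to the single vertex `none`. -/
noncomputable def contractCompl (A : Set V) (v : V) : Option A :=
  if h : v ∈ A then some ⟨v, h⟩ else none

theorem contractCompl_surjective (hA : Aᶜ.Nonempty) : (contractCompl A).Surjective := by
  rintro (_ | ⟨v, hv⟩)
  · obtain ⟨v, hv⟩ := hA
    exact ⟨v, dif_neg hv⟩
  · exact ⟨v, dif_pos hv⟩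

theorem contractCompl_eq_iff :
    contractCompl A x = contractCompl A y ↔ x = y ∨ x ∉ A ∧ y ∉ A := by
  by_cases hx : x ∈ A <;> by_cases hy : y ∈ A <;> grind [contractCompl]

theorem contractCompl_preimage_image (hS : S ⊆ A ∨ Aᶜ ⊆ S) :
    contractCompl A ⁻¹' (contractCompl A '' S) = S := by
  refine (Set.subset_preimage_image _ _).antisymm' ?_
  rintro x ⟨y, hy, hyx⟩
  obtain rfl | ⟨hyA, hxA⟩ := contractCompl_eq_iff.1 hyx
  · exact hy
  · exact hS.elim (fun h => absurd (h hy) hyA) (fun h => h hxA)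

theorem IsCertificate.meetsDemand_of_contractCompl
    (h : IsCertificate (contractCompl A ∘ s) (contractCompl A ∘ t) F C) (hS : S ⊆ A ∨ Aᶜ ⊆ S) :
    MeetsDemand s t F C S :=
  contractCompl_preimage_image hS ▸ h.meetsDemand_preimage _

theorem IsCertificate.union_of_contractCompl [DecidableEq ε]
    (hA : cutSize s t F A ≤ 1) (hAne : A.Nonempty) (hAcne : Aᶜ.Nonempty)
    (h₁ : IsCertificate (contractCompl A ∘ s) (contractCompl A ∘ t) F C₁)
    (h₂ : IsCertificate (contractCompl Aᶜ ∘ s) (contractCompl Aᶜ ∘ t) F C₂) :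
    IsCertificate s t F (C₁ ∪ C₂) := by
  have hsub : C₁ ∪ C₂ ⊆ F := union_subset h₁.1 h₂.1
  refine ⟨hsub, meetsDemand_of_uncrossing hsub hA hAne hAcne (fun S hS => ?_) fun S hS => ?_⟩
  · exact (h₁.meetsDemand_of_contractCompl hS).mono subset_union_left
  · rw [← compl_compl A] at hS
    exact (h₂.meetsDemand_of_contractCompl (by simpa using hS)).mono subset_union_right

theorem card_option_add_card_option_compl [Finite V] (A : Set V) :
    Nat.card (Option A) + Nat.card (Option ↥Aᶜ) = Nat.card V + 2 := by
  rw [Finite.card_option, Finite.card_option, ← Set.ncard_add_ncard_compl A,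
    Nat.card_coe_set_eq, Nat.card_coe_set_eq]
  lia

theorem three_le_card_option [Finite V] (hA : A.Nontrivial) : 3 ≤ Nat.card (Option A) := by
  rw [Finite.card_option, Nat.card_coe_set_eq]
  have := Set.one_lt_ncard_iff_nontrivial.2 hA
  lia

end Contraction

section Existence

theorem IsStrong.subsingleton_of_cutSize_lt_one (hF : IsStrong s t F) (hr : r ∉ S)
    (hlt : cutSize s t F S < 1) : S.Subsingleton := by
  by_contra hS
  have := hF S (Set.not_subsingleton_iff.1 hS).nonempty ⟨r, hr⟩
  lia

theorem Linked.subsingleton_of_cutSize_lt_two (hxy : Linked s t F x y) (hne : x ≠ y)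
    (htrivial : ∀ S : Set V, S.Nontrivial → Sᶜ.Nontrivial → 2 ≤ cutSize s t F S)
    (hx : x ∉ S) (hlt : cutSize s t F S < 2) : S.Subsingleton := by
  by_contra hS
  have hy : y ∉ S := fun hy => hlt.not_ge (hxy S (by tauto))
  exact hlt.not_ge (htrivial S (Set.not_subsingleton_iff.1 hS) ⟨x, hx, y, hy, hne⟩)

theorem IsStrong.exists_isCertificate_of_trivial_cuts [Finite V] (hF : IsStrong s t F)
    (htrivial : ∀ S : Set V, S.Nontrivial → Sᶜ.Nontrivial → 2 ≤ cutSize s t F S) :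
    ∃ C, IsCertificate s t F C ∧ #C ≤ 4 * Nat.card V := by
  by_cases hlinked : ∃ x y, x ≠ y ∧ Linked s t F x y
  · obtain ⟨x, y, hne, hxy⟩ := hlinked
    obtain ⟨C, hCF, hcard, hC⟩ := exists_min_cutSize_le_card_le
      (fun _ => hxy.subsingleton_of_cutSize_lt_two hne htrivial)
      (fun _ => hxy.reverse.subsingleton_of_cutSize_lt_two hne fun S hS hSc => by
        rw [← cutSize_compl]
        exact htrivial _ hSc (by rwa [compl_compl]))
    exact ⟨C, isCertificate_of_min_cutSize_le hCF hF one_le_two (fun _ _ _ _ => le_rfl) hC, hcard⟩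
  · push Not at hlinked
    obtain hV | ⟨⟨r⟩⟩ := isEmpty_or_nonempty V
    · have := s.isEmpty
      exact ⟨F, ⟨subset_rfl, fun S => ⟨hF S, fun x => hV.elim x⟩⟩, by simp [eq_empty_of_isEmpty F]⟩
    obtain ⟨C, hCF, hcard, hC⟩ := exists_min_cutSize_le_card_le (r := r)
      (fun _ => hF.subsingleton_of_cutSize_lt_one)
      (fun _ => hF.reverse.subsingleton_of_cutSize_lt_one)
    refine ⟨C, isCertificate_of_min_cutSize_le hCF hF le_rfl ?_ hC, by lia⟩
    exact fun x y hne hxy => absurd hxy (hlinked x y hne)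

-- A contraction step splits `n` into `n₁ + n₂ = n + 2` with `n₁, n₂ ≥ 3`, so `12 * (n - 2)` is
-- additive over the recursion and dominates `4 * n` once `n ≥ 3`.
theorem IsStrong.exists_isCertificate [Finite V] (hF : IsStrong s t F) :
    ∃ C, IsCertificate s t F C ∧ #C ≤ max (4 * Nat.card V) (12 * (Nat.card V - 2)) := by
  classical
  induction hn : Nat.card V using Nat.strong_induction_on generalizing V with
  | _ n ih =>
  by_cases htrivial : ∀ S : Set V, S.Nontrivial → Sᶜ.Nontrivial → 2 ≤ cutSize s t F S
  · obtain ⟨C, hC, hcard⟩ := hF.exists_isCertificate_of_trivial_cuts htrivial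
    exact ⟨C, hC, by lia⟩
  push Not at htrivial
  obtain ⟨A, hA, hAc, hcut⟩ := htrivial
  have hcard := card_option_add_card_option_compl A
  have hcardA := three_le_card_option hA
  have hcardAc := three_le_card_option hAc
  obtain ⟨C₁, hC₁, hcard₁⟩ := ih (Nat.card (Option A)) (by lia)
    (hF.map (contractCompl_surjective hAc.nonempty)) rfl
  obtain ⟨C₂, hC₂, hcard₂⟩ := ih (Nat.card (Option ↥Aᶜ)) (by lia)
    (hF.map (contractCompl_surjective (by simpa using hA.nonempty))) rfl
  refine ⟨C₁ ∪ C₂, .union_of_contractCompl (by lia) hA.nonempty hAc.nonempty hC₁ hC₂, ?_⟩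
  have := card_union_le C₁ C₂
  lia

end Existence

section Paths

theorem reaches_iff_reflTransGen {E : Set (V × V)} :
    Reaches E x y ↔ Relation.ReflTransGen (fun a b => (a, b) ∈ E) x y := by
  constructor
  · rintro ⟨p, hhead, hlast, hchain⟩
    obtain ⟨l, rfl⟩ := List.head?_eq_some_iff.1 hhead
    refine List.relationReflTransGen_of_exists_isChain_cons l hchain ?_
    simpa [List.getLast?_eq_some_getLast] using hlast
  · intro h
    obtain ⟨l, hchain, hlast⟩ := List.exists_isChain_cons_of_relationReflTransGen h
    exact ⟨x :: l, rfl, by simp [List.getLast?_eq_some_getLast, hlast], hchain⟩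

theorem reaches_coe_iff_cutSize_pos {F : Finset (V × V)} :
    Reaches ↑F x y ↔ ∀ S : Set V, x ∈ S → y ∉ S → 0 < cutSize Prod.fst Prod.snd F S := by
  rw [reaches_iff_reflTransGen]
  simp only [cutSize_pos_iff]
  constructor
  · intro h S hx hy
    by_contra! hclosed
    apply hy
    clear hy
    induction h with
    | refl => exact hx
    | tail _ hbc ih => exact hclosed _ hbc ih
  · intro h
    by_contra hnot
    obtain ⟨e, he, hreach, hunreach⟩ := h {z | Relation.ReflTransGen _ x z} .refl hnot
    exact hunreach (hreach.tail he)

theorem twoEdgeConnFrom_coe_iff_two_le_cutSize {F : Finset (V × V)} (hreach : Reaches ↑F x y) :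
    TwoEdgeConnFrom ↑F x y ↔
      ∀ S : Set V, x ∈ S → y ∉ S → 2 ≤ cutSize Prod.fst Prod.snd F S := by
  classical
  rw [reaches_coe_iff_cutSize_pos] at hreach
  simp only [TwoEdgeConnFrom, ← coe_erase, reaches_coe_iff_cutSize_pos, mem_coe]
  constructor
  · intro h S hx hy
    exact (two_le_cutSize_iff_forall_erase (hreach S hx hy)).2 fun e he => h e he S hx hy
  · intro h e he S hx hy
    exact (two_le_cutSize_iff_forall_erase (hreach S hx hy)).1 (h S hx hy) e he

theorem stronglyConnected_coe_iff_isStrong {F : Finset (V × V)} :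
    StronglyConnected (F : Set (V × V)) ↔ IsStrong Prod.fst Prod.snd F := by
  simp only [StronglyConnected, reaches_coe_iff_cutSize_pos]
  exact ⟨fun h S ⟨x, hx⟩ ⟨y, hy⟩ => h x y S hx hy, fun h x y S hx hy => h S ⟨x, hx⟩ ⟨y, hy⟩⟩

theorem twoEdgeConn_coe_iff_linked {F : Finset (V × V)}
    (hF : StronglyConnected (F : Set (V × V))) :
    TwoEdgeConn ↑F x y ↔ Linked Prod.fst Prod.snd F x y := by
  have hfrom (a b : V) := twoEdgeConnFrom_coe_iff_two_le_cutSize (hF a b)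
  obtain rfl | hne := eq_or_ne x y
  · exact iff_of_true (.inl rfl) fun S hS => by tauto
  calc TwoEdgeConn ↑F x y
      ↔ TwoEdgeConnFrom ↑F x y ∧ TwoEdgeConnFrom ↑F y x := by
        simp only [TwoEdgeConn, TwoEdgeConnFrom, hne, false_or, forall_and]
    _ ↔ Linked Prod.fst Prod.snd F x y := by
        rw [hfrom, hfrom, Linked, ← forall_and]
        exact forall_congr' fun S => by tauto

end Paths

end SparseCertificate

open SparseCertificate in
theorem sparse_certificate_exists_general {V : Type*} [Finite V] (E : Set (V × V))
    (hE : StronglyConnected E) :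
    ∃ E' : Set (V × V), E' ⊆ E ∧ E'.ncard ≤ 12 * Nat.card V ∧ StronglyConnected E' ∧
      ∀ v w : V, TwoEdgeConn E' v w ↔ TwoEdgeConn E v w := by
  obtain ⟨F, rfl⟩ := E.toFinite.exists_finset_coe
  obtain ⟨C, hC, hcard⟩ := (stronglyConnected_coe_iff_isStrong.1 hE).exists_isCertificate
  have hCstrong : StronglyConnected (C : Set (V × V)) :=
    stronglyConnected_coe_iff_isStrong.2 hC.isStrong
  refine ⟨C, Finset.coe_subset.2 hC.1, ?_, hCstrong, fun v w => ?_⟩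
  · rw [Set.ncard_coe_finset]
    lia
  · rw [twoEdgeConn_coe_iff_linked hCstrong, twoEdgeConn_coe_iff_linked hE, hC.linked_iff]

/-- Sparse certificate: there is a constant `c` such that every strongly connected
digraph on `n` vertices has a strongly connected spanning subgraph with at most
`c * n` edges and the same 2-edge-connected blocks. -/
theorem sparse_certificate_exists :
    ∃ c : ℕ, ∀ (V : Type) [Fintype V] (E : Set (V × V)),
      StronglyConnected E →
      ∃ E' : Set (V × V), E' ⊆ E ∧ E'.ncard ≤ c * Nat.card V ∧
        StronglyConnected E' ∧
        ∀ v w : V, TwoEdgeConn E' v w ↔ TwoEdgeConn E v w := by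
  exact ⟨12, fun V _ E hE => sparse_certificate_exists_general E hE⟩
end
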